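/- arXiv:math-ph/0303021 — 2 statements merged into one kernel-verified Lean document; each statement's English description precedes it below -/
import Mathlib

section
/- For every j with 0 ≤ j ≤ n, every α ∈ ℝ and every C^∞ function f on X one has e^{R_j} · J[ (L^T − α σ_j)( e^{−R_j} · (J f) ) ] = L f − (1−α) σ_j f, i.e. as operators on smooth functions e^{R_j} J (L^T − α σ_j) J e^{−R_j} = L − (1−α) σ_j; in particular L − ασ_j is conjugate to the time reversal of the formal adjoint of L − (1−α)σ_j. -/
open scoped BigOperators

noncomputable section

/-- `Vc d` : vectors in ℝ^d. -/
abbrev Vc (d : ℕ) := Fin d → ℝ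
/-- Configurations of `m` oscillators. -/
abbrev Cfg (m d : ℕ) := Fin m → Vc d
/-- Phase space X = p × q × r₁ × rₙ (for a chain of `m` oscillators). -/
abbrev Phs (m d : ℕ) := Cfg m d × Cfg m d × Vc d × Vc d

variable {m d : ℕ}

/-- unit coordinate vector in the p-block -/
def eP (i : Fin m) (a : Fin d) : Phs m d := (Pi.single i (Pi.single a 1), 0, 0, 0)
/-- unit coordinate vector in the q-block -/
def eQ (i : Fin m) (a : Fin d) : Phs m d := (0, Pi.single i (Pi.single a 1), 0, 0)
/-- unit coordinate vector in the r₁-block -/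
def eR1 (a : Fin d) : Phs m d := (0, 0, Pi.single a 1, 0)
/-- unit coordinate vector in the rₙ-block -/
def eRn (a : Fin d) : Phs m d := (0, 0, 0, Pi.single a 1)

/-- directional (partial) derivative -/
def PD (f : Phs m d → ℝ) (x v : Phs m d) : ℝ := fderiv ℝ f x v

variable {n : ℕ}

/-- total potential V(q) = Σᵢ U⁽¹⁾(qᵢ) + Σᵢ U⁽²⁾(qᵢ − qᵢ₊₁) of a chain of n+2 oscillators -/
def Vtot (U1 U2 : Vc d → ℝ) (q : Cfg (n+2) d) : ℝ :=
  (∑ i, U1 (q i)) + ∑ i : Fin (n+1), U2 (q i.castSucc - q i.succ)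

/-- the generator L of the dynamics of the chain coupled to two reservoirs -/
def gen (γ lam T1 Tn : ℝ) (U1 U2 : Vc d → ℝ) (f : Phs (n+2) d → ℝ) (x : Phs (n+2) d) : ℝ :=
  (γ * (T1 * ∑ a, PD (fun y => PD f y (eR1 a)) x (eR1 a)
        - ∑ a, x.2.2.1 a * PD f x (eR1 a))
    + lam * ((∑ a, x.1 0 a * PD f x (eR1 a)) - ∑ a, x.2.2.1 a * PD f x (eP 0 a)))
  + (γ * (Tn * ∑ a, PD (fun y => PD f y (eRn a)) x (eRn a)
        - ∑ a, x.2.2.2 a * PD f x (eRn a))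
    + lam * ((∑ a, x.1 (Fin.last (n+1)) a * PD f x (eRn a))
        - ∑ a, x.2.2.2 a * PD f x (eP (Fin.last (n+1)) a)))
  + ∑ i, ((∑ a, x.1 i a * PD f x (eQ i a))
        - ∑ a, fderiv ℝ (Vtot U1 U2) x.2.1 (Pi.single i (Pi.single a 1)) * PD f x (eP i a))

/-- the formal adjoint Lᵀ of L with respect to Lebesgue measure -/
def genT (γ lam T1 Tn : ℝ) (U1 U2 : Vc d → ℝ) (g : Phs (n+2) d → ℝ) (x : Phs (n+2) d) : ℝ :=
  (γ * (T1 * ∑ a, PD (fun y => PD g y (eR1 a)) x (eR1 a)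
        + ∑ a, PD (fun y => y.2.2.1 a * g y) x (eR1 a))
    - lam * ((∑ a, x.1 0 a * PD g x (eR1 a)) - ∑ a, x.2.2.1 a * PD g x (eP 0 a)))
  + (γ * (Tn * ∑ a, PD (fun y => PD g y (eRn a)) x (eRn a)
        + ∑ a, PD (fun y => y.2.2.2 a * g y) x (eRn a))
    - lam * ((∑ a, x.1 (Fin.last (n+1)) a * PD g x (eRn a))
        - ∑ a, x.2.2.2 a * PD g x (eP (Fin.last (n+1)) a)))
  - ∑ i, ((∑ a, x.1 i a * PD g x (eQ i a))
        - ∑ a, fderiv ℝ (Vtot U1 U2) x.2.1 (Pi.single i (Pi.single a 1)) * PD g x (eP i a))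

/-- time reversal (Jf)(p,q,r₁,rₙ) = f(−p,q,r₁,rₙ) -/
def Jop (f : Phs m d → ℝ) : Phs m d → ℝ := fun x => f (-x.1, x.2.1, x.2.2.1, x.2.2.2)

/-- nat-indexed access to the oscillator coordinates (junk value outside the range) -/
def cfgNat (q : Cfg (n+2) d) (k : ℕ) : Vc d := if h : k < n + 2 then q ⟨k, h⟩ else 0

/-- local energies H_k, 0-indexed: k ∈ {0, …, n+1} -/
def Hloc (U1 U2 : Vc d → ℝ) (k : ℕ) (x : Phs (n+2) d) : ℝ :=
  (∑ a, (cfgNat x.1 k a) ^ 2) / 2 + U1 (cfgNat x.2.1 k)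
  + (if k = 0 then 0 else (1/2) * U2 (cfgNat x.2.1 (k-1) - cfgNat x.2.1 k))
  + (if k = n + 1 then 0 else (1/2) * U2 (cfgNat x.2.1 k - cfgNat x.2.1 (k+1)))

/-- heat flows Φ_j, j ∈ {0, …, n+2}: Φ_0 = −λr₁·p_0 is the flow from the left
reservoir into the chain, Φ_{n+2} = λrₙ·p_{n+1} the flow into the right reservoir,
and for 1 ≤ j ≤ n+1, Φ_j is the flow from the (0-indexed) oscillator j−1 to the
oscillator j. -/
def heatFlow (lam : ℝ) (U2 : Vc d → ℝ) (j : ℕ) (x : Phs (n+2) d) : ℝ :=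
  if j = 0 then - lam * ∑ a, x.2.2.1 a * x.1 0 a
  else if j = n + 2 then lam * ∑ a, x.2.2.2 a * x.1 (Fin.last (n+1)) a
  else ∑ a, ((cfgNat x.1 (j-1) a + cfgNat x.1 j a) / 2)
        * fderiv ℝ U2 (cfgNat x.2.1 (j-1) - cfgNat x.2.1 j) (Pi.single a 1)

/-- entropy production σ_j = (1/Tₙ − 1/T₁) Φ_j -/
def sigmaEP (lam T1 Tn : ℝ) (U2 : Vc d → ℝ) (j : ℕ) (x : Phs (n+2) d) : ℝ :=
  (1 / Tn - 1 / T1) * heatFlow lam U2 j x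

/-- two-temperatures Gibbs exponent R_j, j ∈ {0, …, n+2}: the first j oscillators
are weighted with 1/T₁, the remaining ones with 1/Tₙ. -/
def Rj (T1 Tn : ℝ) (U1 U2 : Vc d → ℝ) (j : ℕ) (x : Phs (n+2) d) : ℝ :=
  (1 / T1) * ((∑ a, (x.2.2.1 a) ^ 2) / 2 + ∑ k ∈ Finset.range j, Hloc U1 U2 k x)
  + (1 / Tn) * ((∑ k ∈ Finset.Ico j (n+2), Hloc U1 U2 k x) + (∑ a, (x.2.2.2 a) ^ 2) / 2)

def cN (k : ℕ) : Cfg (n+2) d →L[ℝ] Vc d :=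
  if h : k < n + 2 then ContinuousLinearMap.proj (⟨k, h⟩ : Fin (n+2)) else 0

theorem cfgNat_eq (q : Cfg (n+2) d) (k : ℕ) : cfgNat q k = cN k q := by
  unfold cfgNat cN; split_ifs <;> simp

theorem cN_single (i : Fin (n+2)) (w : Vc d) (k : ℕ) :
    cN (n := n) k (Pi.single i w) = if k = i.1 then w else 0 := by
  unfold cN
  split_ifs with h h1 h1
  · simp only [ContinuousLinearMap.proj_apply]
    have : (⟨k, h⟩ : Fin (n+2)) = i := Fin.ext h1
    rw [this]; simp
  · simp only [ContinuousLinearMap.proj_apply]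
    rw [Pi.single_eq_of_ne]; intro h2; apply h1; rw [← h2]
  · exact absurd i.2 (by omega)
  · simp

theorem cN_fin (i : Fin (n+2)) (q : Cfg (n+2) d) : cN (n := n) i.1 q = q i := by
  unfold cN; simp

theorem Vtot_eq (U1 U2 : Vc d → ℝ) (q : Cfg (n+2) d) : Vtot U1 U2 q =
    (∑ k ∈ Finset.range (n+2), U1 (cN k q))
      + ∑ k ∈ Finset.range (n+1), U2 (cN k q - cN (k+1) q) := by
  unfold Vtot
  rw [Finset.sum_range, Finset.sum_range]
  congr 1
  · simp only [cN_fin]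
  · apply Finset.sum_congr rfl
    intro i _
    rw [← cN_fin i.castSucc q, ← cN_fin i.succ q]; simp

theorem fderiv_Vtot (U1 U2 : Vc d → ℝ) (hU1 : Differentiable ℝ U1) (hU2 : Differentiable ℝ U2)
    (q w : Cfg (n+2) d) : fderiv ℝ (Vtot U1 U2) q w =
    (∑ k ∈ Finset.range (n+2), fderiv ℝ U1 (cN k q) (cN k w))
      + ∑ k ∈ Finset.range (n+1), fderiv ℝ U2 (cN k q - cN (k+1) q) (cN k w - cN (k+1) w) := by
  have h : HasFDerivAt (Vtot U1 U2) ((∑ k ∈ Finset.range (n+2), (fderiv ℝ U1 (cN k q)).comp (cN k))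
      + ∑ k ∈ Finset.range (n+1), (fderiv ℝ U2 (cN k q - cN (k+1) q)).comp (cN k - cN (k+1))) q := by
    rw [show Vtot U1 U2 = _ from funext (Vtot_eq (n := n) U1 U2)]
    apply HasFDerivAt.add
    · apply HasFDerivAt.fun_sum
      intro k _
      exact (hU1 _).hasFDerivAt.comp q (cN k).hasFDerivAt
    · apply HasFDerivAt.fun_sum
      intro k _
      exact (hU2 _).hasFDerivAt.comp q ((cN k).hasFDerivAt.sub (cN (k+1)).hasFDerivAt)
  rw [h.fderiv]
  simp

theorem fderiv_Vtot_single (U1 U2 : Vc d → ℝ) (hU1 : Differentiable ℝ U1)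
    (hU2 : Differentiable ℝ U2) (q : Cfg (n+2) d) (k : ℕ) (hk : k < n + 2) (w : Vc d) :
    fderiv ℝ (Vtot U1 U2) q (Pi.single ⟨k, hk⟩ w) =
    fderiv ℝ U1 (cN k q) w
      + (if k = n + 1 then 0 else fderiv ℝ U2 (cN k q - cN (k+1) q) w)
      - (if k = 0 then 0 else fderiv ℝ U2 (cN (k-1) q - cN k q) w) := by
  rw [fderiv_Vtot U1 U2 hU1 hU2]
  simp only [cN_single, map_sub, Finset.sum_sub_distrib]
  have e1 : ∀ (F : ℕ → Vc d →L[ℝ] ℝ) (m : ℕ), ∑ x ∈ Finset.range m, F x (if x = k then w else 0)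
      = if k < m then F k w else 0 := by
    intro F m
    have h := Finset.sum_ite_eq' (Finset.range m) k (fun x => F x w)
    simp only [Finset.mem_range] at h
    rw [← h]
    apply Finset.sum_congr rfl; intro x _; split_ifs <;> simp
  rw [e1 (fun x => fderiv ℝ U1 (cN x q)), e1 (fun x => fderiv ℝ U2 (cN x q - cN (x+1) q))]
  have e2 : ∑ x ∈ Finset.range (n+1), fderiv ℝ U2 (cN x q - cN (x+1) q) (if x + 1 = k then w else 0)
      = if k = 0 then 0 else fderiv ℝ U2 (cN (k-1) q - cN k q) w := by
    rcases k with _ | k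
    · simp
    · rw [Finset.sum_eq_single k]
      · simp
      · intro b _ hb; rw [if_neg (by omega)]; simp
      · intro h; exact absurd (Finset.mem_range.2 (by omega)) h
  rw [e2, if_pos hk]
  by_cases h : k = n + 1
  · rw [if_neg (by omega : ¬ k < n + 1), if_pos h]; ring
  · rw [if_pos (by omega), if_neg h]; ring

/-- drift vector field -/
def bF (lam : ℝ) (U1 U2 : Vc d → ℝ) (x : Phs (n+2) d) : Phs (n+2) d :=
  (- (Pi.single 0 (lam • x.2.2.1)) - Pi.single (Fin.last (n+1)) (lam • x.2.2.2)
      - fun i a => fderiv ℝ (Vtot U1 U2) x.2.1 (Pi.single i (Pi.single a 1)),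
    x.1, lam • x.1 0, lam • x.1 (Fin.last (n+1)))

theorem vec_sum (w : Vc d) : w = ∑ a, w a • (Pi.single a 1 : Vc d) := by
  ext b; simp [Finset.sum_apply, Pi.single_apply]

theorem clm_vec (F : Vc d →L[ℝ] ℝ) (w : Vc d) : F w = ∑ a, w a * F (Pi.single a 1) := by
  conv_lhs => rw [vec_sum w]
  simp [map_sum]

theorem cfg_sum (w : Cfg (n+2) d) : w = ∑ i, Pi.single i (w i) := by
  exact (Finset.univ_sum_single w).symm

theorem clm_P1 (F : Phs (n+2) d →L[ℝ] ℝ) (i : Fin (n+2)) (w : Vc d) :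
    F (Pi.single i w, 0, 0, 0) = ∑ a, w a * F (eP i a) :=
  clm_vec (F.comp ((ContinuousLinearMap.inl ℝ _ _).comp
    (ContinuousLinearMap.single ℝ (fun _ : Fin (n+2) => Vc d) i))) w

theorem clm_P (F : Phs (n+2) d →L[ℝ] ℝ) (w : Cfg (n+2) d) :
    F (w, 0, 0, 0) = ∑ i, ∑ a, w i a * F (eP i a) := by
  have : F.comp (ContinuousLinearMap.inl ℝ _ _) w = F (w, 0, 0, 0) := rfl
  rw [← this, cfg_sum w, map_sum]
  rw [← cfg_sum w]
  exact Finset.sum_congr rfl fun i _ => clm_P1 F i (w i)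

theorem clm_Q (F : Phs (n+2) d →L[ℝ] ℝ) (w : Cfg (n+2) d) :
    F (0, w, 0, 0) = ∑ i, ∑ a, w i a * F (eQ i a) := by
  let G := F.comp ((ContinuousLinearMap.inr ℝ (Cfg (n+2) d) _).comp
    (ContinuousLinearMap.inl ℝ (Cfg (n+2) d) (Vc d × Vc d)))
  have : G w = F (0, w, 0, 0) := rfl
  rw [← this, cfg_sum w, map_sum]
  rw [← cfg_sum w]
  exact Finset.sum_congr rfl fun i _ =>
    clm_vec (G.comp (ContinuousLinearMap.single ℝ (fun _ : Fin (n+2) => Vc d) i)) (w i)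

theorem clm_R1 (F : Phs (n+2) d →L[ℝ] ℝ) (w : Vc d) :
    F (0, 0, w, 0) = ∑ a, w a * F (eR1 a) :=
  clm_vec (F.comp ((ContinuousLinearMap.inr ℝ (Cfg (n+2) d) _).comp
    ((ContinuousLinearMap.inr ℝ (Cfg (n+2) d) (Vc d × Vc d)).comp
      (ContinuousLinearMap.inl ℝ (Vc d) (Vc d))))) w

theorem clm_Rn (F : Phs (n+2) d →L[ℝ] ℝ) (w : Vc d) :
    F (0, 0, 0, w) = ∑ a, w a * F (eRn a) :=
  clm_vec (F.comp ((ContinuousLinearMap.inr ℝ (Cfg (n+2) d) _).comp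
    ((ContinuousLinearMap.inr ℝ (Cfg (n+2) d) (Vc d × Vc d)).comp
      (ContinuousLinearMap.inr ℝ (Vc d) (Vc d))))) w

theorem clm_bF (F : Phs (n+2) d →L[ℝ] ℝ) (lam : ℝ) (U1 U2 : Vc d → ℝ) (x : Phs (n+2) d) :
    F (bF lam U1 U2 x) =
    lam * ((∑ a, x.1 0 a * F (eR1 a)) - ∑ a, x.2.2.1 a * F (eP 0 a))
    + lam * ((∑ a, x.1 (Fin.last (n+1)) a * F (eRn a))
        - ∑ a, x.2.2.2 a * F (eP (Fin.last (n+1)) a))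
    + ∑ i, ((∑ a, x.1 i a * F (eQ i a))
        - ∑ a, fderiv ℝ (Vtot U1 U2) x.2.1 (Pi.single i (Pi.single a 1)) * F (eP i a)) := by
  have : bF lam U1 U2 x = - (lam • ((Pi.single 0 x.2.2.1, 0, 0, 0) : Phs (n+2) d))
      - lam • ((Pi.single (Fin.last (n+1)) x.2.2.2, 0, 0, 0) : Phs (n+2) d)
      - ((fun i a => fderiv ℝ (Vtot U1 U2) x.2.1 (Pi.single i (Pi.single a 1)), 0, 0, 0) :
          Phs (n+2) d)
      + (0, x.1, 0, 0) + lam • ((0, 0, x.1 0, 0) : Phs (n+2) d)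
      + lam • ((0, 0, 0, x.1 (Fin.last (n+1))) : Phs (n+2) d) := by
    unfold bF
    refine Prod.ext ?_ (Prod.ext ?_ (Prod.ext ?_ ?_)) <;> simp [Pi.single_smul]
  rw [this]
  simp only [map_add, map_sub, map_neg, map_smul, clm_P1]
  simp only [clm_P, clm_Q, clm_R1, clm_Rn,
    Finset.sum_sub_distrib, smul_eq_mul]
  ring

theorem contDiff_Hloc (U1 U2 : Vc d → ℝ) (hU1 : ContDiff ℝ (⊤ : ℕ∞) U1)
    (hU2 : ContDiff ℝ (⊤ : ℕ∞) U2) (k : ℕ) :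
    ContDiff ℝ (⊤ : ℕ∞) (Hloc (n := n) U1 U2 k) := by
  unfold Hloc
  simp only [cfgNat_eq]
  have hp : ContDiff ℝ (⊤ : ℕ∞) fun x : Phs (n+2) d => cN k x.1 :=
    (cN k).contDiff.comp contDiff_fst
  have hq : ∀ k, ContDiff ℝ (⊤ : ℕ∞) fun x : Phs (n+2) d => cN k x.2.1 := fun k =>
    (cN k).contDiff.comp (contDiff_fst.comp contDiff_snd)
  refine ContDiff.add (ContDiff.add (ContDiff.add ?_ (hU1.comp (hq k))) ?_) ?_
  · refine ContDiff.div_const (ContDiff.sum fun a _ => ContDiff.pow ?_ 2) 2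
    exact contDiff_pi.1 hp a
  · split_ifs
    · exact contDiff_const
    · exact contDiff_const.mul (hU2.comp ((hq _).sub (hq _)))
  · split_ifs
    · exact contDiff_const
    · exact contDiff_const.mul (hU2.comp ((hq _).sub (hq _)))

theorem fderiv_Hloc (U1 U2 : Vc d → ℝ) (hU1 : Differentiable ℝ U1)
    (hU2 : Differentiable ℝ U2) (k : ℕ) (x v : Phs (n+2) d) :
    fderiv ℝ (Hloc (n := n) U1 U2 k) x v =
      (∑ a, cN k x.1 a * cN k v.1 a) + fderiv ℝ U1 (cN k x.2.1) (cN k v.2.1)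
      + (if k = 0 then 0 else (1/2) * fderiv ℝ U2 (cN (k-1) x.2.1 - cN k x.2.1)
          (cN (k-1) v.2.1 - cN k v.2.1))
      + (if k = n + 1 then 0 else (1/2) * fderiv ℝ U2 (cN k x.2.1 - cN (k+1) x.2.1)
          (cN k v.2.1 - cN (k+1) v.2.1)) := by
  let pr : Phs (n+2) d →L[ℝ] Cfg (n+2) d := ContinuousLinearMap.fst ℝ _ _
  let qr : Phs (n+2) d →L[ℝ] Cfg (n+2) d :=
    (ContinuousLinearMap.fst ℝ _ _).comp (ContinuousLinearMap.snd ℝ _ _)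
  have hp : ∀ a, HasFDerivAt (fun x : Phs (n+2) d => cN k x.1 a)
      ((ContinuousLinearMap.proj a).comp ((cN k).comp pr)) x := fun a =>
    ((ContinuousLinearMap.proj (R := ℝ) (φ := fun _ : Fin d => ℝ) a).comp
      ((cN k).comp pr)).hasFDerivAt
  have hq : ∀ k, HasFDerivAt (fun x : Phs (n+2) d => cN k x.2.1) ((cN k).comp qr) x := fun k =>
    ((cN k).comp qr).hasFDerivAt
  have hu : ∀ k l, HasFDerivAt (fun x : Phs (n+2) d => (1/2) * U2 (cN k x.2.1 - cN l x.2.1))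
      ((1/2 : ℝ) • (fderiv ℝ U2 (cN k x.2.1 - cN l x.2.1)).comp
        ((cN k).comp qr - (cN l).comp qr)) x := fun k l =>
    ((hU2 _).hasFDerivAt.comp x ((hq k).sub (hq l))).const_mul (1/2)
  have h1 := HasFDerivAt.fun_sum (u := Finset.univ) fun a _ => (hp a).pow 2
  have h2 := h1.mul_const (1/2 : ℝ)
  have h3 := h2.add ((hU1 _).hasFDerivAt.comp x (hq k))
  have h4 : HasFDerivAt (fun x : Phs (n+2) d => if k = 0 then (0:ℝ) else
      (1/2) * U2 (cN (k-1) x.2.1 - cN k x.2.1)) (if k = 0 then 0 else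
      ((1/2 : ℝ) • (fderiv ℝ U2 (cN (k-1) x.2.1 - cN k x.2.1)).comp
        ((cN (k-1)).comp qr - (cN k).comp qr))) x := by
    split_ifs
    · exact hasFDerivAt_const _ _
    · exact hu _ _
  have h5 : HasFDerivAt (fun x : Phs (n+2) d => if k = n + 1 then (0:ℝ) else
      (1/2) * U2 (cN k x.2.1 - cN (k+1) x.2.1)) (if k = n + 1 then 0 else
      ((1/2 : ℝ) • (fderiv ℝ U2 (cN k x.2.1 - cN (k+1) x.2.1)).comp
        ((cN k).comp qr - (cN (k+1)).comp qr))) x := by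
    split_ifs
    · exact hasFDerivAt_const _ _
    · exact hu _ _
  have h6 := (h3.add h4).add h5
  have h7 := h6.congr_of_eventuallyEq (f₁ := Hloc (n := n) U1 U2 k)
    (Filter.Eventually.of_forall fun y => by
    simp only [Hloc, cfgNat_eq, div_eq_mul_inv, one_mul, Pi.add_apply, Function.comp])
  rw [h7.fderiv]
  simp only [ContinuousLinearMap.add_apply]
  congr 1
  · congr 1
    · congr 1
      simp only [ContinuousLinearMap.smul_apply, ContinuousLinearMap.sum_apply, smul_eq_mul]
      rw [Finset.mul_sum]
      refine Finset.sum_congr rfl fun a _ => ?_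
      simp [pr]
      ring
    · split_ifs <;> simp [qr]
  · split_ifs <;> simp [qr]

theorem fderiv_Hloc_bF (lam : ℝ) (U1 U2 : Vc d → ℝ) (hU1 : Differentiable ℝ U1)
    (hU2 : Differentiable ℝ U2) (k : ℕ) (hk : k < n + 2) (x : Phs (n+2) d) :
    fderiv ℝ (Hloc (n := n) U1 U2 k) x (bF lam U1 U2 x) =
      heatFlow lam U2 k x - heatFlow lam U2 (k+1) x := by
  rw [fderiv_Hloc U1 U2 hU1 hU2]
  have hV := fderiv_Vtot_single U1 U2 hU1 hU2 x.2.1 k hk (cN k x.1)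
  have hV2 : fderiv ℝ (Vtot U1 U2) x.2.1 (Pi.single ⟨k, hk⟩ (cN k x.1)) =
    ∑ a, cN k x.1 a * fderiv ℝ (Vtot U1 U2) x.2.1 (Pi.single ⟨k, hk⟩ (Pi.single a 1)) :=
    clm_vec ((fderiv ℝ (Vtot U1 U2) x.2.1).comp
      (ContinuousLinearMap.single ℝ (fun _ : Fin (n+2) => Vc d) ⟨k, hk⟩)) (cN k x.1)
  have hb : ∑ a, cN k x.1 a * cN k (bF lam U1 U2 x).1 a =
      (if k = 0 then - lam * ∑ a, x.2.2.1 a * x.1 0 a else 0)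
      - (if k = n + 1 then lam * ∑ a, x.2.2.2 a * x.1 (Fin.last (n+1)) a else 0)
      - fderiv ℝ (Vtot U1 U2) x.2.1 (Pi.single ⟨k, hk⟩ (cN k x.1)) := by
    rw [hV2]
    simp only [bF, map_sub, map_neg, cN_single, Fin.val_zero, Fin.val_last]
    rw [show cN (n := n) k (fun i a => fderiv ℝ (Vtot U1 U2) x.2.1
      (Pi.single i (Pi.single a 1))) = _ from cN_fin ⟨k, hk⟩ _]
    simp only [Pi.sub_apply, Pi.neg_apply, mul_sub, Finset.sum_sub_distrib]
    congr 1
    congr 1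
    · split_ifs with h
      · rw [h, show cN (n := n) 0 x.1 = _ from cN_fin 0 _, Finset.mul_sum]
        refine Finset.sum_congr rfl fun a _ => ?_
        simp; ring
      · simp [h]
    · split_ifs with h
      · rw [h, show cN (n := n) (n+1) x.1 = _ from cN_fin (Fin.last (n+1)) _, Finset.mul_sum]
        refine Finset.sum_congr rfl fun a _ => ?_
        simp; ring
      · simp [h]
  have hf : ∀ l, l ≠ n + 1 → heatFlow lam U2 (l+1) x =
      (1/2) * fderiv ℝ U2 (cN l x.2.1 - cN (l+1) x.2.1) (cN l x.1 + cN (l+1) x.1) := by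
    intro l hl
    rw [clm_vec, Finset.mul_sum]
    simp only [heatFlow, cfgNat_eq]
    rw [if_neg (by omega), if_neg (by omega)]
    refine Finset.sum_congr rfl fun a _ => ?_
    simp; ring
  rw [hb, hV]
  have hbq : (bF lam U1 U2 x).2.1 = x.1 := rfl
  rw [hbq]
  have hr : heatFlow lam U2 (k+1) x = if k = n + 1 then
      lam * ∑ a, x.2.2.2 a * x.1 (Fin.last (n+1)) a else
      (1/2) * fderiv ℝ U2 (cN k x.2.1 - cN (k+1) x.2.1) (cN k x.1 + cN (k+1) x.1) := by
    split_ifs with h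
    · simp [heatFlow, h]
    · exact hf k h
  have hl : heatFlow lam U2 k x = if k = 0 then
      - lam * ∑ a, x.2.2.1 a * x.1 0 a else
      (1/2) * fderiv ℝ U2 (cN (k-1) x.2.1 - cN k x.2.1) (cN (k-1) x.1 + cN k x.1) := by
    split_ifs with h
    · simp [heatFlow, h]
    · obtain ⟨l, rfl⟩ := Nat.exists_eq_succ_of_ne_zero h
      exact hf l (by omega)
  rw [hr, hl]
  simp only [map_add, map_sub]
  split_ifs <;> ring

theorem contDiff_Rj (T1 Tn : ℝ) (U1 U2 : Vc d → ℝ) (hU1 : ContDiff ℝ (⊤ : ℕ∞) U1)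
    (hU2 : ContDiff ℝ (⊤ : ℕ∞) U2) (j : ℕ) :
    ContDiff ℝ (⊤ : ℕ∞) (Rj (n := n) T1 Tn U1 U2 j) := by
  have hH := contDiff_Hloc (n := n) U1 U2 hU1 hU2
  unfold Rj
  have h1 : ∀ a, ContDiff ℝ (⊤ : ℕ∞) fun x : Phs (n+2) d => x.2.2.1 a := fun a => by fun_prop
  have h2 : ∀ a, ContDiff ℝ (⊤ : ℕ∞) fun x : Phs (n+2) d => x.2.2.2 a := fun a => by fun_prop
  refine ContDiff.add (contDiff_const.mul (ContDiff.add ?_ ?_))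
    (contDiff_const.mul (ContDiff.add ?_ ?_))
  · exact ContDiff.div_const (ContDiff.sum fun a _ => (h1 a).pow 2) 2
  · exact ContDiff.sum fun k _ => hH k
  · exact ContDiff.sum fun k _ => hH k
  · exact ContDiff.div_const (ContDiff.sum fun a _ => (h2 a).pow 2) 2

theorem fderiv_Rj (T1 Tn : ℝ) (U1 U2 : Vc d → ℝ) (hU1 : ContDiff ℝ (⊤ : ℕ∞) U1)
    (hU2 : ContDiff ℝ (⊤ : ℕ∞) U2) (j : ℕ) (x v : Phs (n+2) d) :
    fderiv ℝ (Rj (n := n) T1 Tn U1 U2 j) x v =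
    (1 / T1) * ((∑ a, x.2.2.1 a * v.2.2.1 a)
        + ∑ k ∈ Finset.range j, fderiv ℝ (Hloc U1 U2 k) x v)
    + (1 / Tn) * ((∑ k ∈ Finset.Ico j (n+2), fderiv ℝ (Hloc U1 U2 k) x v)
        + (∑ a, x.2.2.2 a * v.2.2.2 a)) := by
  have hH : ∀ k, HasFDerivAt (Hloc (n := n) U1 U2 k) (fderiv ℝ (Hloc (n := n) U1 U2 k) x) x :=
    fun k => ((contDiff_Hloc (n := n) U1 U2 hU1 hU2 k).differentiable (by simp) x).hasFDerivAt
  let A : Phs (n+2) d →L[ℝ] Vc d := (ContinuousLinearMap.fst ℝ _ _).comp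
    ((ContinuousLinearMap.snd ℝ _ _).comp (ContinuousLinearMap.snd ℝ _ _))
  let B : Phs (n+2) d →L[ℝ] Vc d := (ContinuousLinearMap.snd ℝ _ _).comp
    ((ContinuousLinearMap.snd ℝ _ _).comp (ContinuousLinearMap.snd ℝ _ _))
  have hs : ∀ A : Phs (n+2) d →L[ℝ] Vc d, HasFDerivAt (fun x => (∑ a, (A x a)^2) * (1/2 : ℝ)) _ x :=
    fun A => (HasFDerivAt.fun_sum (u := Finset.univ) fun a _ =>
      (((ContinuousLinearMap.proj (R := ℝ) (φ := fun _ : Fin d => ℝ) a).comp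
        A).hasFDerivAt.pow 2)).mul_const (1/2 : ℝ)
  have h := (((hs A).add (HasFDerivAt.fun_sum (u := Finset.range j) fun k _ => hH k)).const_mul
    (1/T1)).add (((HasFDerivAt.fun_sum (u := Finset.Ico j (n+2)) fun k _ => hH k).add
      (hs B)).const_mul (1/Tn))
  have h7 := h.congr_of_eventuallyEq (f₁ := Rj (n := n) T1 Tn U1 U2 j)
    (Filter.Eventually.of_forall fun y => by
    simp [Rj, div_eq_mul_inv, A, B])
  rw [h7.fderiv]
  have e : ∀ c w : Fin d → ℝ, ∑ a, c a * w a = (1/2) * ∑ a, 2 * c a * w a := by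
    intro c w; rw [Finset.mul_sum]; exact Finset.sum_congr rfl fun a _ => by ring
  rw [e x.2.2.1 v.2.2.1, e x.2.2.2 v.2.2.2]
  simp [A, B]
  ring

theorem fderiv_Rj_bF (lam T1 Tn : ℝ) (U1 U2 : Vc d → ℝ) (hU1 : ContDiff ℝ (⊤ : ℕ∞) U1)
    (hU2 : ContDiff ℝ (⊤ : ℕ∞) U2) (j : ℕ) (hj : j ≤ n + 2) (x : Phs (n+2) d) :
    fderiv ℝ (Rj (n := n) T1 Tn U1 U2 j) x (bF lam U1 U2 x) = sigmaEP lam T1 Tn U2 j x := by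
  have hd1 := hU1.differentiable (by simp)
  have hd2 := hU2.differentiable (by simp)
  rw [fderiv_Rj T1 Tn U1 U2 hU1 hU2]
  have e1 : ∀ i ≤ n + 2, ∑ k ∈ Finset.range i, fderiv ℝ (Hloc U1 U2 k) x (bF lam U1 U2 x) =
      heatFlow lam U2 0 x - heatFlow lam U2 i x := by
    intro i hi
    rw [← Finset.sum_range_sub' (fun k => heatFlow lam U2 k x)]
    refine Finset.sum_congr rfl fun k hk => ?_
    exact fderiv_Hloc_bF lam U1 U2 hd1 hd2 k (by have := Finset.mem_range.1 hk; omega) x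
  rw [Finset.sum_Ico_eq_sub _ hj, e1 _ hj, e1 _ le_rfl]
  have f0 : heatFlow lam U2 0 x = - ∑ a, x.2.2.1 a * (bF lam U1 U2 x).2.2.1 a := by
    simp only [heatFlow, bF, if_true, Finset.mul_sum, ← Finset.sum_neg_distrib]
    refine Finset.sum_congr rfl fun a _ => ?_
    simp; ring
  have fn : heatFlow lam U2 (n+2) x = ∑ a, x.2.2.2 a * (bF lam U1 U2 x).2.2.2 a := by
    simp only [heatFlow, bF, if_true, Finset.mul_sum]
    rw [if_neg (by omega)]
    refine Finset.sum_congr rfl fun a _ => ?_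
    simp; ring
  rw [f0, fn]
  simp only [sigmaEP]
  ring

theorem fderiv_Hloc_R (U1 U2 : Vc d → ℝ) (hU1 : Differentiable ℝ U1)
    (hU2 : Differentiable ℝ U2) (k : ℕ) (x : Phs (n+2) d) (w : Vc d × Vc d) :
    fderiv ℝ (Hloc (n := n) U1 U2 k) x (0, 0, w) = 0 := by
  rw [fderiv_Hloc U1 U2 hU1 hU2]; simp

theorem fderiv_Rj_R1 (T1 Tn : ℝ) (U1 U2 : Vc d → ℝ) (hU1 : ContDiff ℝ (⊤ : ℕ∞) U1)
    (hU2 : ContDiff ℝ (⊤ : ℕ∞) U2) (j : ℕ) (x : Phs (n+2) d) (a : Fin d) :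
    fderiv ℝ (Rj (n := n) T1 Tn U1 U2 j) x (eR1 a) = x.2.2.1 a / T1 := by
  rw [fderiv_Rj T1 Tn U1 U2 hU1 hU2]
  simp only [eR1, fderiv_Hloc_R U1 U2 (hU1.differentiable (by simp)) (hU2.differentiable (by simp))]
  simp [Pi.single_apply]; ring

theorem fderiv_Rj_Rn (T1 Tn : ℝ) (U1 U2 : Vc d → ℝ) (hU1 : ContDiff ℝ (⊤ : ℕ∞) U1)
    (hU2 : ContDiff ℝ (⊤ : ℕ∞) U2) (j : ℕ) (x : Phs (n+2) d) (a : Fin d) :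
    fderiv ℝ (Rj (n := n) T1 Tn U1 U2 j) x (eRn a) = x.2.2.2 a / Tn := by
  rw [fderiv_Rj T1 Tn U1 U2 hU1 hU2]
  simp only [eRn, fderiv_Hloc_R U1 U2 (hU1.differentiable (by simp)) (hU2.differentiable (by simp))]
  simp [Pi.single_apply]; ring

theorem hasFDerivAt_Eg (R g : Phs m d → ℝ) (hR : Differentiable ℝ R) (hg : Differentiable ℝ g)
    (y v : Phs m d) :
    fderiv ℝ (fun z => Real.exp (- R z) * g z) y v =
      Real.exp (- R y) * (fderiv ℝ g y v - fderiv ℝ R y v * g y) := by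
  have h := ((hR y).hasFDerivAt.neg.exp).mul (hg y).hasFDerivAt
  have h' : HasFDerivAt (fun z => Real.exp (- R z) * g z) _ y := h
  rw [h'.fderiv]
  simp
  ring

/-- reservoir identity -/
theorem reservoir (R g l : Phs m d → ℝ) (hR : ContDiff ℝ (⊤ : ℕ∞) R)
    (hg : ContDiff ℝ (⊤ : ℕ∞) g) (hl : ContDiff ℝ (⊤ : ℕ∞) l) (T : ℝ) (hT : T ≠ 0) (v : Phs m d)
    (hRl : ∀ y, fderiv ℝ R y v = l y / T) (y : Phs m d) :
    T * PD (fun z => PD (fun z => Real.exp (- R z) * g z) z v) y v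
      + PD (fun z => l z * (Real.exp (- R z) * g z)) y v
    = Real.exp (- R y) * (T * PD (fun z => PD g z v) y v - l y * PD g y v) := by
  have dR := hR.differentiable (by simp)
  have dg := hg.differentiable (by simp)
  have cg : ContDiff ℝ (⊤ : ℕ∞) (fun z => PD g z v) := by
    unfold PD
    exact (hg.fderiv_right (m := (⊤ : ℕ∞)) (by simp)).clm_apply contDiff_const
  have dg' := cg.differentiable (by simp)
  have cE : ContDiff ℝ (⊤ : ℕ∞) (fun z => Real.exp (- R z) * g z) := hR.neg.exp.mul hg
  have dl : Differentiable ℝ (fun z => l z * (Real.exp (- R z) * g z)) :=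
    (hl.mul cE).differentiable (by simp)
  have e1 : (fun z => PD (fun z => Real.exp (- R z) * g z) z v) = fun z =>
      (Real.exp (- R z) * PD g z v) - T⁻¹ * (l z * (Real.exp (- R z) * g z)) := by
    funext z
    unfold PD
    rw [hasFDerivAt_Eg R g dR dg, hRl]
    ring
  have d1 : Differentiable ℝ (fun z => Real.exp (- R z) * PD g z v) :=
    (hR.neg.exp.mul cg).differentiable (by simp)
  have e2 : PD (fun z => PD (fun z => Real.exp (- R z) * g z) z v) y v =
      PD (fun z => Real.exp (- R z) * PD g z v) y v
        - T⁻¹ * PD (fun z => l z * (Real.exp (- R z) * g z)) y v := by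
    rw [e1]
    have h := (d1 y).hasFDerivAt.sub ((dl y).hasFDerivAt.const_mul T⁻¹)
    have h' : HasFDerivAt (fun z => (Real.exp (- R z) * PD g z v)
      - T⁻¹ * (l z * (Real.exp (- R z) * g z))) _ y := h
    conv_lhs => unfold PD
    rw [show fderiv ℝ (fun z => (Real.exp (- R z) * fderiv ℝ g z v)
      - T⁻¹ * (l z * (Real.exp (- R z) * g z))) y = _ from h'.fderiv]
    simp [PD]
  rw [e2]
  have e3 : PD (fun z => Real.exp (- R z) * PD g z v) y v = Real.exp (- R y) *
      (PD (fun z => PD g z v) y v - l y / T * PD g y v) := by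
    have := hasFDerivAt_Eg R (fun z => PD g z v) dR dg' y v
    rw [hRl] at this
    exact this
  rw [e3]
  field_simp
  ring

/-- time reversal as a linear map -/
def Jl : Phs m d →L[ℝ] Phs m d :=
  (-(ContinuousLinearMap.fst ℝ _ _)).prod (ContinuousLinearMap.snd ℝ _ _)

theorem Jop_eq (f : Phs m d → ℝ) (x : Phs m d) : Jop f x = f (Jl x) := rfl

theorem Jl_Jl (x : Phs m d) : Jl (Jl x) = x := by
  refine Prod.ext ?_ rfl
  simp [Jl]

theorem fderiv_Jop (f : Phs m d → ℝ) (hf : Differentiable ℝ f) (x v : Phs m d) :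
    fderiv ℝ (Jop f) x v = fderiv ℝ f (Jl x) (Jl v) := by
  have h := (hf (Jl x)).hasFDerivAt.comp x Jl.hasFDerivAt
  have h' : HasFDerivAt (Jop f) _ x := h
  rw [h'.fderiv]; rfl

theorem Jl_R1 (a : Fin d) : Jl (eR1 a : Phs m d) = eR1 a := by
  refine Prod.ext ?_ rfl
  simp [Jl, eR1]

theorem Jl_Rn (a : Fin d) : Jl (eRn a : Phs m d) = eRn a := by
  refine Prod.ext ?_ rfl
  simp [Jl, eRn]

theorem Jl_bF (lam : ℝ) (U1 U2 : Vc d → ℝ) (x : Phs (n+2) d) :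
    Jl (bF lam U1 U2 (Jl x)) = - bF lam U1 U2 x := by
  refine Prod.ext ?_ (Prod.ext ?_ (Prod.ext ?_ ?_)) <;> simp [Jl, bF]

theorem Hloc_Jl (U1 U2 : Vc d → ℝ) (k : ℕ) (x : Phs (n+2) d) :
    Hloc U1 U2 k (Jl x) = Hloc U1 U2 k x := by
  simp [Hloc, Jl, cfgNat_eq]

theorem Rj_Jl (T1 Tn : ℝ) (U1 U2 : Vc d → ℝ) (j : ℕ) (x : Phs (n+2) d) :
    Rj T1 Tn U1 U2 j (Jl x) = Rj T1 Tn U1 U2 j x := by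
  simp only [Rj, Hloc_Jl]; rfl

theorem sigma_Jl (lam T1 Tn : ℝ) (U2 : Vc d → ℝ) (j : ℕ) (x : Phs (n+2) d) :
    sigmaEP lam T1 Tn U2 j (Jl x) = - sigmaEP lam T1 Tn U2 j x := by
  have : heatFlow lam U2 j (Jl x) = - heatFlow lam U2 j x := by
    simp only [heatFlow, cfgNat_eq]
    split_ifs
    · simp [Jl]
    · simp [Jl]
    · rw [← Finset.sum_neg_distrib]
      refine Finset.sum_congr rfl fun a _ => ?_
      simp [Jl]; ring
  simp [sigmaEP, this]

theorem gen_eq (γ lam T1 Tn : ℝ) (U1 U2 : Vc d → ℝ) (f : Phs (n+2) d → ℝ) (x : Phs (n+2) d) :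
    gen γ lam T1 Tn U1 U2 f x =
    γ * (∑ a, (T1 * PD (fun y => PD f y (eR1 a)) x (eR1 a) - x.2.2.1 a * PD f x (eR1 a)))
    + γ * (∑ a, (Tn * PD (fun y => PD f y (eRn a)) x (eRn a) - x.2.2.2 a * PD f x (eRn a)))
    + fderiv ℝ f x (bF lam U1 U2 x) := by
  rw [clm_bF, gen]
  simp only [Finset.sum_sub_distrib, ← Finset.mul_sum, PD]
  ring

theorem genT_eq (γ lam T1 Tn : ℝ) (U1 U2 : Vc d → ℝ) (g : Phs (n+2) d → ℝ) (x : Phs (n+2) d) :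
    genT γ lam T1 Tn U1 U2 g x =
    γ * (∑ a, (T1 * PD (fun y => PD g y (eR1 a)) x (eR1 a)
      + PD (fun y => y.2.2.1 a * g y) x (eR1 a)))
    + γ * (∑ a, (Tn * PD (fun y => PD g y (eRn a)) x (eRn a)
      + PD (fun y => y.2.2.2 a * g y) x (eRn a)))
    - fderiv ℝ g x (bF lam U1 U2 x) := by
  rw [clm_bF, genT]
  simp only [Finset.sum_sub_distrib, Finset.sum_add_distrib, ← Finset.mul_sum, PD]
  ring

theorem PD2_Jop (f : Phs m d → ℝ) (hf : ContDiff ℝ (⊤ : ℕ∞) f) (v : Phs m d) (hv : Jl v = v)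
    (x : Phs m d) : PD (fun z => PD (Jop f) z v) (Jl x) v = PD (fun z => PD f z v) x v := by
  have cg : ContDiff ℝ (⊤ : ℕ∞) (fun z => PD f z v) := by
    unfold PD
    exact (hf.fderiv_right (m := (⊤ : ℕ∞)) (by simp)).clm_apply contDiff_const
  have e : (fun z => PD (Jop f) z v) = Jop (fun z => PD f z v) := by
    funext z
    rw [Jop_eq]
    unfold PD
    rw [fderiv_Jop f (hf.differentiable (by simp)), hv]
  rw [e]
  conv_lhs => unfold PD
  rw [show fderiv ℝ (Jop fun z => fderiv ℝ f z v) (Jl x) v = _ from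
    fderiv_Jop (fun z => PD f z v) (cg.differentiable (by simp)) (Jl x) v, hv, Jl_Jl]
  rfl

/-- for every j ∈ {0,…,n+2}, α ∈ ℝ and smooth f one has
`e^{R_j} · J[(Lᵀ − ασ_j)(e^{−R_j}·(Jf))] = L f − (1−α) σ_j f`,
i.e. `L − ασ_j` is conjugate to the time reversal of the formal adjoint of
`L − (1−α)σ_j`. -/
theorem stmt3 (n d : ℕ) (hd : 1 ≤ d) (γ lam T1 Tn : ℝ)
    (hγ : 0 < γ) (hlam : 0 < lam) (hT1 : 0 < T1) (hTn : 0 < Tn)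
    (U1 U2 : Vc d → ℝ) (hU1 : ContDiff ℝ (⊤ : ℕ∞) U1) (hU2 : ContDiff ℝ (⊤ : ℕ∞) U2) :
    ∀ j : ℕ, j ≤ n + 2 → ∀ α : ℝ, ∀ f : Phs (n+2) d → ℝ, ContDiff ℝ (⊤ : ℕ∞) f →
      ∀ x : Phs (n+2) d,
        Real.exp (Rj T1 Tn U1 U2 j x)
            * Jop (fun y =>
                genT γ lam T1 Tn U1 U2
                  (fun z => Real.exp (- Rj T1 Tn U1 U2 j z) * Jop f z) y
                - α * sigmaEP lam T1 Tn U2 j y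
                    * (Real.exp (- Rj T1 Tn U1 U2 j y) * Jop f y)) x
          = gen γ lam T1 Tn U1 U2 f x
            - (1 - α) * sigmaEP lam T1 Tn U2 j x * f x := by
  intro j hj α f hf x
  have hR := contDiff_Rj (n := n) T1 Tn U1 U2 hU1 hU2 j
  have hg : ContDiff ℝ (⊤ : ℕ∞) (Jop f) := hf.comp Jl.contDiff
  have df := hf.differentiable (by simp)
  have dR := hR.differentiable (by simp)
  have dg := hg.differentiable (by simp)
  rw [Jop_eq, genT_eq, gen_eq]
  have r1 : ∀ a, _ := fun a : Fin d => reservoir (Rj (n := n) T1 Tn U1 U2 j) (Jop f)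
    (fun y => y.2.2.1 a) hR hg (by fun_prop) T1 hT1.ne' (eR1 a)
    (fun y => fderiv_Rj_R1 T1 Tn U1 U2 hU1 hU2 j y a) (Jl x)
  have r2 : ∀ a, _ := fun a : Fin d => reservoir (Rj (n := n) T1 Tn U1 U2 j) (Jop f)
    (fun y => y.2.2.2 a) hR hg (by fun_prop) Tn hTn.ne' (eRn a)
    (fun y => fderiv_Rj_Rn T1 Tn U1 U2 hU1 hU2 j y a) (Jl x)
  have p1 : ∀ a, PD (Jop f) (Jl x) (eR1 a) = PD f x (eR1 a) := fun a => by
    unfold PD; rw [fderiv_Jop f df, Jl_R1, Jl_Jl]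
  have p2 : ∀ a, PD (Jop f) (Jl x) (eRn a) = PD f x (eRn a) := fun a => by
    unfold PD; rw [fderiv_Jop f df, Jl_Rn, Jl_Jl]
  simp only [r1, r2]
  simp only [PD2_Jop f hf _ (Jl_R1 _), PD2_Jop f hf _ (Jl_Rn _), p1, p2, ← Finset.mul_sum]
  rw [hasFDerivAt_Eg _ _ dR dg, fderiv_Rj_bF lam T1 Tn U1 U2 hU1 hU2 j hj, fderiv_Jop f df,
    Jl_bF, Jl_Jl, sigma_Jl, Jop_eq, Jl_Jl, Rj_Jl, map_neg]
  have q1 : (Jl x).2.2.1 = x.2.2.1 := rfl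
  have q2 : (Jl x).2.2.2 = x.2.2.2 := rfl
  rw [q1, q2]
  have hE : Real.exp (Rj T1 Tn U1 U2 j x) * Real.exp (- Rj T1 Tn U1 U2 j x) = 1 := by
    rw [← Real.exp_add]; simp
  linear_combination (γ * (∑ a, (T1 * PD (fun y => PD f y (eR1 a)) x (eR1 a) - x.2.2.1 a * PD f x (eR1 a)))
    + γ * (∑ a, (Tn * PD (fun y => PD f y (eRn a)) x (eRn a) - x.2.2.2 a * PD f x (eRn a)))
    + fderiv ℝ f x (bF lam U1 U2 x) - (1 - α) * sigmaEP lam T1 Tn U2 j x * f x) * hE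

end
end

section
/- Fix j with 0 ≤ j ≤ n. Let ρ be a C^∞ everywhere positive function on X satisfying L^T ρ = 0 (a smooth stationary density), and define F(p,q,r₁,rₙ) = −R_j(p,q,r₁,rₙ) − log ρ(−p,q,r₁,rₙ) (so that ρ = J(e^{−R_j} e^{−F})). Then the entropy production is given pointwise by σ_j = γ Σ_{i∈{1,n}} T_i |∇_{r_i} F|² − L F everywhere on X. -/
open scoped BigOperators

noncomputable section

variable {m d : ℕ}

variable {n : ℕ}

lemma cfg_line (q w : Cfg (n+2) d) (t : ℝ) (k : ℕ) :
    cfgNat (q + t • w) k = cfgNat q k + t • cfgNat w k := by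
  unfold cfgNat; split_ifs <;> simp

lemma cfg_contDiff (k : ℕ) : ContDiff ℝ (⊤ : ℕ∞) (fun q : Cfg (n+2) d => cfgNat q k) := by
  unfold cfgNat; split_ifs <;> fun_prop

lemma hloc_contDiff {U1 U2 : Vc d → ℝ} (hU1 : ContDiff ℝ (⊤ : ℕ∞) U1)
    (hU2 : ContDiff ℝ (⊤ : ℕ∞) U2) (k : ℕ) :
    ContDiff ℝ (⊤ : ℕ∞) (fun x : Phs (n+2) d => Hloc U1 U2 k x) := by
  have hp : ∀ k, ContDiff ℝ (⊤ : ℕ∞) (fun x : Phs (n+2) d => cfgNat x.1 k) :=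
    fun k => (cfg_contDiff k).comp contDiff_fst
  have hq : ∀ k, ContDiff ℝ (⊤ : ℕ∞) (fun x : Phs (n+2) d => cfgNat x.2.1 k) :=
    fun k => (cfg_contDiff k).comp (contDiff_fst.comp contDiff_snd)
  have hpa : ∀ k a, ContDiff ℝ (⊤ : ℕ∞) (fun x : Phs (n+2) d => cfgNat x.1 k a) :=
    fun k a => contDiff_pi.1 (hp k) a
  unfold Hloc
  refine ContDiff.add (ContDiff.add (ContDiff.add ?_ ?_) ?_) ?_
  · exact (ContDiff.sum fun a _ => (hpa k a).pow 2).div_const 2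
  · exact hU1.comp (hq k)
  · split_ifs
    · exact contDiff_const
    · exact contDiff_const.mul (hU2.comp ((hq _).sub (hq _)))
  · split_ifs
    · exact contDiff_const
    · exact contDiff_const.mul (hU2.comp ((hq _).sub (hq _)))

lemma rj_contDiff {U1 U2 : Vc d → ℝ} (hU1 : ContDiff ℝ (⊤ : ℕ∞) U1)
    (hU2 : ContDiff ℝ (⊤ : ℕ∞) U2) (T1 Tn : ℝ) (j : ℕ) :
    ContDiff ℝ (⊤ : ℕ∞) (fun x : Phs (n+2) d => Rj T1 Tn U1 U2 j x) := by
  unfold Rj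
  have hH := fun k => hloc_contDiff (n := n) hU1 hU2 k
  refine ContDiff.add (contDiff_const.mul (ContDiff.add ?_ ?_))
    (contDiff_const.mul (ContDiff.add ?_ ?_))
  · fun_prop
  · exact ContDiff.sum fun k _ => hH k
  · exact ContDiff.sum fun k _ => hH k
  · fun_prop

/-- derivative of the local energy in the direction v -/
def dH (U1 U2 : Vc d → ℝ) (k : ℕ) (x v : Phs (n+2) d) : ℝ :=
  (∑ a, cfgNat x.1 k a * cfgNat v.1 k a) + fderiv ℝ U1 (cfgNat x.2.1 k) (cfgNat v.2.1 k)
  + (if k = 0 then 0 else (1/2) * fderiv ℝ U2 (cfgNat x.2.1 (k-1) - cfgNat x.2.1 k)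
      (cfgNat v.2.1 (k-1) - cfgNat v.2.1 k))
  + (if k = n + 1 then 0 else (1/2) * fderiv ℝ U2 (cfgNat x.2.1 k - cfgNat x.2.1 (k+1))
      (cfgNat v.2.1 k - cfgNat v.2.1 (k+1)))

lemma line_comp {E : Type*} [NormedAddCommGroup E] [NormedSpace ℝ E] {U : E → ℝ}
    (hU : ContDiff ℝ (⊤ : ℕ∞) U) (a b : E) :
    HasDerivAt (fun t : ℝ => U (a + t • b)) (fderiv ℝ U a b) 0 := by
  have h1 : HasDerivAt (fun t : ℝ => a + t • b) b 0 := by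
    simpa using ((hasDerivAt_id (0:ℝ)).smul_const b).const_add a
  have h2 : HasFDerivAt U (fderiv ℝ U a) (a + (0:ℝ) • b) := by
    simpa using (hU.differentiable (by simp) a).hasFDerivAt
  exact h2.comp_hasDerivAt (0:ℝ) h1

lemma sq_line (a b : Vc d) :
    HasDerivAt (fun t : ℝ => (∑ c, ((a + t • b) c) ^ 2) / 2) (∑ c, a c * b c) 0 := by
  have : ∀ c ∈ (Finset.univ : Finset (Fin d)),
      HasDerivAt (fun t : ℝ => ((a + t • b) c) ^ 2) (2 * (a c * b c)) 0 := by
    intro c _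
    have h1 : HasDerivAt (fun t : ℝ => (a + t • b) c) (b c) 0 := by
      simpa using ((hasDerivAt_id (0:ℝ)).mul_const (b c)).const_add (a c)
    have := h1.pow 2
    refine this.congr_deriv ?_
    simp; ring
  have h := (HasDerivAt.fun_sum this).div_const 2
  refine h.congr_deriv ?_
  rw [← Finset.mul_sum]; ring

lemma hloc_line {U1 U2 : Vc d → ℝ} (hU1 : ContDiff ℝ (⊤ : ℕ∞) U1)
    (hU2 : ContDiff ℝ (⊤ : ℕ∞) U2) (k : ℕ) (x v : Phs (n+2) d) :
    HasDerivAt (fun t : ℝ => Hloc U1 U2 k (x + t • v)) (dH U1 U2 k x v) 0 := by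
  unfold Hloc dH
  have e1 : ∀ t : ℝ, (x + t • v).1 = x.1 + t • v.1 := fun t => rfl
  have e2 : ∀ t : ℝ, (x + t • v).2.1 = x.2.1 + t • v.2.1 := fun t => rfl
  have e3 : ∀ (a b a' b' : Vc d) (t : ℝ), a + t • b - (a' + t • b') = (a - a') + t • (b - b') := by
    intros; module
  simp only [e1, e2, cfg_line, e3]
  refine HasDerivAt.fun_add (HasDerivAt.fun_add (HasDerivAt.fun_add ?_ ?_) ?_) ?_
  · exact sq_line _ _
  · exact line_comp hU1 _ _
  · split_ifs
    · exact hasDerivAt_const _ _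
    · exact (line_comp hU2 _ _).const_mul _
  · split_ifs
    · exact hasDerivAt_const _ _
    · exact (line_comp hU2 _ _).const_mul _

lemma rj_fderiv {U1 U2 : Vc d → ℝ} (hU1 : ContDiff ℝ (⊤ : ℕ∞) U1)
    (hU2 : ContDiff ℝ (⊤ : ℕ∞) U2) (T1 Tn : ℝ) (j : ℕ) (x v : Phs (n+2) d) :
    PD (Rj T1 Tn U1 U2 j) x v =
      (1 / T1) * ((∑ a, x.2.2.1 a * v.2.2.1 a) + ∑ k ∈ Finset.range j, dH U1 U2 k x v)
      + (1 / Tn) * ((∑ k ∈ Finset.Ico j (n+2), dH U1 U2 k x v) + (∑ a, x.2.2.2 a * v.2.2.2 a)) := by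
  have h1 := line_comp (rj_contDiff (n := n) hU1 hU2 T1 Tn j) x v
  refine h1.unique ?_
  unfold Rj
  refine HasDerivAt.fun_add (HasDerivAt.const_mul _ (HasDerivAt.fun_add ?_ ?_))
    (HasDerivAt.const_mul _ (HasDerivAt.fun_add ?_ ?_))
  · exact sq_line _ _
  · exact HasDerivAt.fun_sum fun k _ => hloc_line hU1 hU2 k x v
  · exact HasDerivAt.fun_sum fun k _ => hloc_line hU1 hU2 k x v
  · exact sq_line _ _

lemma vtot_contDiff {U1 U2 : Vc d → ℝ} (hU1 : ContDiff ℝ (⊤ : ℕ∞) U1)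
    (hU2 : ContDiff ℝ (⊤ : ℕ∞) U2) : ContDiff ℝ (⊤ : ℕ∞) (Vtot (n := n) U1 U2) := by
  unfold Vtot
  refine ContDiff.add (ContDiff.sum fun i _ => hU1.comp (by fun_prop))
    (ContDiff.sum fun i _ => hU2.comp (by fun_prop))

lemma vtot_fderiv {U1 U2 : Vc d → ℝ} (hU1 : ContDiff ℝ (⊤ : ℕ∞) U1)
    (hU2 : ContDiff ℝ (⊤ : ℕ∞) U2) (q w : Cfg (n+2) d) :
    fderiv ℝ (Vtot U1 U2) q w = (∑ i, fderiv ℝ U1 (q i) (w i))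
      + ∑ i : Fin (n+1), fderiv ℝ U2 (q i.castSucc - q i.succ) (w i.castSucc - w i.succ) := by
  refine (line_comp (vtot_contDiff hU1 hU2) q w).unique ?_
  unfold Vtot
  have e3 : ∀ (a b a' b' : Vc d) (t : ℝ), a + t • b - (a' + t • b') = (a - a') + t • (b - b') := by
    intros; module
  simp only [Pi.add_apply, Pi.smul_apply, e3]
  exact HasDerivAt.fun_add (HasDerivAt.fun_sum fun i _ => line_comp hU1 _ _)
    (HasDerivAt.fun_sum fun i _ => line_comp hU2 _ _)

lemma vtot_single {U1 U2 : Vc d → ℝ} (hU1 : ContDiff ℝ (⊤ : ℕ∞) U1)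
    (hU2 : ContDiff ℝ (⊤ : ℕ∞) U2) (q : Cfg (n+2) d) (k : ℕ) (hk : k < n + 2) (u : Vc d) :
    fderiv ℝ (Vtot U1 U2) q (Pi.single ⟨k, hk⟩ u) = fderiv ℝ U1 (cfgNat q k) u
      + (if k = n + 1 then 0 else fderiv ℝ U2 (cfgNat q k - cfgNat q (k+1)) u)
      - (if k = 0 then 0 else fderiv ℝ U2 (cfgNat q (k-1) - cfgNat q k) u) := by
  rw [vtot_fderiv hU1 hU2]
  simp only [map_sub, Finset.sum_sub_distrib]
  have a1 : (∑ i, fderiv ℝ U1 (q i) ((Pi.single ⟨k, hk⟩ u : Cfg (n+2) d) i))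
      = fderiv ℝ U1 (cfgNat q k) u := by
    rw [Finset.sum_eq_single ⟨k, hk⟩]
    · simp [cfgNat, hk]
    · intro b _ hb; simp [Pi.single_eq_of_ne hb]
    · simp
  have a2 : (∑ i : Fin (n+1), fderiv ℝ U2 (q i.castSucc - q i.succ)
      ((Pi.single ⟨k, hk⟩ u : Cfg (n+2) d) i.castSucc))
      = if k = n + 1 then 0 else fderiv ℝ U2 (cfgNat q k - cfgNat q (k+1)) u := by
    split_ifs with h
    · refine Finset.sum_eq_zero fun i _ => ?_
      rw [Pi.single_eq_of_ne (by intro h'; have := congrArg Fin.val h'; have := i.2; simp at *; omega)]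
      simp
    · have hk' : k < n + 1 := by omega
      rw [Finset.sum_eq_single ⟨k, hk'⟩]
      · simp [cfgNat, hk, hk']
      · intro b _ hb
        rw [Pi.single_eq_of_ne (by intro h'; apply hb; ext; simpa using congrArg Fin.val h')]
        simp
      · simp
  have a3 : (∑ i : Fin (n+1), fderiv ℝ U2 (q i.castSucc - q i.succ)
      ((Pi.single ⟨k, hk⟩ u : Cfg (n+2) d) i.succ))
      = if k = 0 then 0 else fderiv ℝ U2 (cfgNat q (k-1) - cfgNat q k) u := by
    split_ifs with h
    · refine Finset.sum_eq_zero fun i _ => ?_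
      rw [Pi.single_eq_of_ne (by intro h'; have := congrArg Fin.val h'; simp at *; omega)]
      simp
    · obtain ⟨k, rfl⟩ := Nat.exists_eq_succ_of_ne_zero h
      have hk' : k < n + 1 := by omega
      have hk2 : k < n + 2 := by omega
      rw [Finset.sum_eq_single ⟨k, hk'⟩]
      · simp [cfgNat, hk', hk2]
      · intro b _ hb
        rw [Pi.single_eq_of_ne (by
          intro h'; apply hb; ext; have := congrArg Fin.val h'; simp at this; simpa using this)]
        simp
      · simp
  rw [a1, a2, a3]; ring

/-- Hamiltonian part of the drift as a vector -/
def vB (lam : ℝ) (U1 U2 : Vc d → ℝ) (x : Phs (n+2) d) : Phs (n+2) d :=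
  (fun i a => (if i = 0 then - lam * x.2.2.1 a else 0)
      + (if i = Fin.last (n+1) then - lam * x.2.2.2 a else 0)
      - fderiv ℝ (Vtot U1 U2) x.2.1 (Pi.single i (Pi.single a 1)),
    x.1, fun a => lam * x.1 0 a, fun a => lam * x.1 (Fin.last (n+1)) a)

lemma vec_decomp {E : Type*} [AddCommGroup E] [Module ℝ E] (ℓ : Vc d →ₗ[ℝ] E) (u : Vc d) :
    ℓ u = ∑ a, u a • ℓ (Pi.single a 1) := by
  conv_lhs => rw [pi_eq_sum_univ' u]
  simp only [map_sum, map_smul]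

lemma clm_decomp (ℓ : Phs (n+2) d →L[ℝ] ℝ) (v : Phs (n+2) d) :
    ℓ v = (∑ i, ∑ a, v.1 i a * ℓ (eP i a)) + (∑ i, ∑ a, v.2.1 i a * ℓ (eQ i a))
      + (∑ a, v.2.2.1 a * ℓ (eR1 a)) + ∑ a, v.2.2.2 a * ℓ (eRn a) := by
  have h : v = (∑ i, ∑ a, v.1 i a • (eP i a)) + (∑ i, ∑ a, v.2.1 i a • (eQ i a))
      + (∑ a, v.2.2.1 a • (eR1 a)) + ∑ a, v.2.2.2 a • (eRn a) := by
    have s1 : ∀ w : Cfg (n+2) d, w = ∑ i, ∑ a, w i a • (Pi.single i (Pi.single a 1) : Cfg (n+2) d) := by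
      intro w; ext i a
      simp [Finset.sum_apply, Pi.single_apply, apply_ite, ite_apply]
    have s2 : ∀ w : Vc d, w = ∑ a, w a • (Pi.single a 1 : Vc d) := by
      intro w; ext a
      simp [Finset.sum_apply, Pi.single_apply]
    refine Prod.ext ?_ (Prod.ext ?_ (Prod.ext ?_ ?_))
    · simpa [eP, eQ, eR1, eRn, Prod.fst_sum, Prod.snd_sum] using s1 v.1
    · simpa [eP, eQ, eR1, eRn, Prod.fst_sum, Prod.snd_sum] using s1 v.2.1
    · simpa [eP, eQ, eR1, eRn, Prod.fst_sum, Prod.snd_sum] using s2 v.2.2.1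
    · simpa [eP, eQ, eR1, eRn, Prod.fst_sum, Prod.snd_sum] using s2 v.2.2.2
  conv_lhs => rw [h]
  simp only [map_add, map_sum, map_smul, smul_eq_mul]

lemma vB_apply (lam : ℝ) (U1 U2 : Vc d → ℝ) (x : Phs (n+2) d) (ℓ : Phs (n+2) d →L[ℝ] ℝ) :
    ℓ (vB lam U1 U2 x) =
      lam * ((∑ a, x.1 0 a * ℓ (eR1 a)) - ∑ a, x.2.2.1 a * ℓ (eP 0 a))
      + lam * ((∑ a, x.1 (Fin.last (n+1)) a * ℓ (eRn a))
        - ∑ a, x.2.2.2 a * ℓ (eP (Fin.last (n+1)) a))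
      + ∑ i, ((∑ a, x.1 i a * ℓ (eQ i a))
        - ∑ a, fderiv ℝ (Vtot U1 U2) x.2.1 (Pi.single i (Pi.single a 1)) * ℓ (eP i a)) := by
  rw [clm_decomp]
  simp only [vB, sub_mul, add_mul, Finset.sum_sub_distrib, Finset.sum_add_distrib]
  have b1 : ∀ (k : Fin (n+2)) (g : Vc d), (∑ i, ∑ a, (if i = k then - lam * g a else 0) * ℓ (eP i a))
      = - lam * ∑ a, g a * ℓ (eP k a) := by
    intro k g
    rw [Finset.sum_eq_single k]
    · simp [Finset.mul_sum, mul_assoc]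
    · intro b _ hb; simp [hb]
    · simp
  rw [b1, b1]
  simp only [mul_assoc, ← Finset.mul_sum]
  ring

lemma dH_vB (lam : ℝ) {U1 U2 : Vc d → ℝ} (hU1 : ContDiff ℝ (⊤ : ℕ∞) U1)
    (hU2 : ContDiff ℝ (⊤ : ℕ∞) U2) (x : Phs (n+2) d) (k : ℕ) (hk : k < n + 2) :
    dH U1 U2 k x (vB lam U1 U2 x) = heatFlow lam U2 k x - heatFlow lam U2 (k+1) x := by
  have key : (∑ a, cfgNat x.1 k a * fderiv ℝ (Vtot U1 U2) x.2.1 (Pi.single ⟨k, hk⟩ (Pi.single a 1)))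
      = fderiv ℝ U1 (cfgNat x.2.1 k) (cfgNat x.1 k)
      + (if k = n + 1 then 0 else fderiv ℝ U2 (cfgNat x.2.1 k - cfgNat x.2.1 (k+1)) (cfgNat x.1 k))
      - (if k = 0 then 0 else fderiv ℝ U2 (cfgNat x.2.1 (k-1) - cfgNat x.2.1 k) (cfgNat x.1 k)) := by
    rw [← vtot_single hU1 hU2 x.2.1 k hk]
    have := vec_decomp ((fderiv ℝ (Vtot U1 U2) x.2.1).toLinearMap ∘ₗ
      LinearMap.single ℝ (fun _ : Fin (n+2) => Vc d) ⟨k, hk⟩) (cfgNat x.1 k)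
    simpa using this.symm
  have hf : ∀ j, 1 ≤ j → j < n + 2 → heatFlow lam U2 j x
      = (1/2) * fderiv ℝ U2 (cfgNat x.2.1 (j-1) - cfgNat x.2.1 j) (cfgNat x.1 (j-1) + cfgNat x.1 j) := by
    intro j h1 h2
    have := vec_decomp (fderiv ℝ U2 (cfgNat x.2.1 (j-1) - cfgNat x.2.1 j)).toLinearMap
      (cfgNat x.1 (j-1) + cfgNat x.1 j)
    simp only [ContinuousLinearMap.coe_coe] at this
    rw [this, heatFlow, if_neg (by omega), if_neg (by omega), Finset.mul_sum]
    refine Finset.sum_congr rfl fun a _ => ?_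
    simp only [Pi.add_apply, smul_eq_mul]; ring
  have hA : (∑ a, cfgNat x.1 k a * cfgNat (vB lam U1 U2 x).1 k a)
      = (if k = 0 then - lam * ∑ a, x.2.2.1 a * x.1 0 a else 0)
        - (if k = n + 1 then lam * ∑ a, x.2.2.2 a * x.1 (Fin.last (n+1)) a else 0)
        - (∑ a, cfgNat x.1 k a * fderiv ℝ (Vtot U1 U2) x.2.1 (Pi.single ⟨k, hk⟩ (Pi.single a 1))) := by
    have c1 : ∀ a, cfgNat (vB lam U1 U2 x).1 k a = (if k = 0 then - lam * x.2.2.1 a else 0)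
      + (if k = n+1 then - lam * x.2.2.2 a else 0)
      - fderiv ℝ (Vtot U1 U2) x.2.1 (Pi.single ⟨k, hk⟩ (Pi.single a 1)) := by
      intro a
      have f1 : ((⟨k, hk⟩ : Fin (n+2)) = 0) ↔ k = 0 := by rw [Fin.ext_iff]; rfl
      have f2 : ((⟨k, hk⟩ : Fin (n+2)) = Fin.last (n+1)) ↔ k = n + 1 := by rw [Fin.ext_iff]; rfl
      simp only [cfgNat, vB, dif_pos hk, f1, f2]
    simp only [c1, mul_sub, mul_add, Finset.sum_sub_distrib, Finset.sum_add_distrib]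
    congr 1
    rw [sub_eq_add_neg]
    congr 1
    · split_ifs with h
      · subst h
        rw [Finset.mul_sum]; refine Finset.sum_congr rfl fun a _ => ?_
        have : cfgNat x.1 0 = x.1 0 := by simp [cfgNat]
        rw [this]; ring
      · simp
    · split_ifs with h
      · subst h
        rw [Finset.mul_sum, ← Finset.sum_neg_distrib]; refine Finset.sum_congr rfl fun a _ => ?_
        have : cfgNat x.1 (n+1) = x.1 (Fin.last (n+1)) := by simp [cfgNat, Fin.last]
        rw [this]; ring
      · simp
  have hq : (vB lam U1 U2 x).2.1 = x.1 := rfl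
  unfold dH
  rw [hA, key, hq]
  have hL : heatFlow lam U2 k x = (if k = 0 then - lam * ∑ a, x.2.2.1 a * x.1 0 a else 0)
      + (if k = 0 then 0 else (1/2) * fderiv ℝ U2 (cfgNat x.2.1 (k-1) - cfgNat x.2.1 k)
          (cfgNat x.1 (k-1) + cfgNat x.1 k)) := by
    split_ifs with h
    · simp [heatFlow, h]
    · rw [hf k (by omega) hk]; ring
  have hR : heatFlow lam U2 (k+1) x
      = (if k = n + 1 then lam * ∑ a, x.2.2.2 a * x.1 (Fin.last (n+1)) a else 0)
      + (if k = n + 1 then 0 else (1/2) * fderiv ℝ U2 (cfgNat x.2.1 k - cfgNat x.2.1 (k+1))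
          (cfgNat x.1 k + cfgNat x.1 (k+1))) := by
    split_ifs with h
    · simp [heatFlow, h]
    · rw [hf (k+1) (by omega) (by omega)]; simp
  rw [hL, hR]
  simp only [map_add, map_sub]
  split_ifs <;> ring

lemma rj_vB (lam : ℝ) {U1 U2 : Vc d → ℝ} (hU1 : ContDiff ℝ (⊤ : ℕ∞) U1)
    (hU2 : ContDiff ℝ (⊤ : ℕ∞) U2) (T1 Tn : ℝ) (j : ℕ) (hj : j ≤ n + 2) (x : Phs (n+2) d) :
    PD (Rj T1 Tn U1 U2 j) x (vB lam U1 U2 x) = sigmaEP lam T1 Tn U2 j x := by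
  rw [rj_fderiv hU1 hU2]
  have t1 : ∑ k ∈ Finset.range j, dH U1 U2 k x (vB lam U1 U2 x)
      = heatFlow lam U2 0 x - heatFlow lam U2 j x := by
    rw [← Finset.sum_range_sub' (fun k => heatFlow lam U2 k x)]
    refine Finset.sum_congr rfl fun k hk => dH_vB lam hU1 hU2 x k ?_
    have := Finset.mem_range.1 hk; omega
  have t2 : ∑ k ∈ Finset.Ico j (n+2), dH U1 U2 k x (vB lam U1 U2 x)
      = heatFlow lam U2 j x - heatFlow lam U2 (n+2) x := by
    have h2 := Finset.sum_range_sub' (fun k => heatFlow lam U2 k x) (n+2)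
    have h3 := Finset.sum_range_sub' (fun k => heatFlow lam U2 k x) j
    rw [Finset.sum_congr rfl fun k hk => dH_vB lam hU1 hU2 x k (Finset.mem_Ico.1 hk).2,
      Finset.sum_Ico_eq_sub _ hj, h2, h3]
    ring
  have h0 : heatFlow lam U2 0 x = - lam * ∑ a, x.2.2.1 a * x.1 0 a := by simp [heatFlow]
  have hn : heatFlow lam U2 (n+2) x = lam * ∑ a, x.2.2.2 a * x.1 (Fin.last (n+1)) a := by
    simp [heatFlow]
  have e1 : ∑ a, x.2.2.1 a * (vB lam U1 U2 x).2.2.1 a = lam * ∑ a, x.2.2.1 a * x.1 0 a := by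
    rw [Finset.mul_sum]; refine Finset.sum_congr rfl fun a _ => ?_
    simp only [vB]; ring
  have e2 : ∑ a, x.2.2.2 a * (vB lam U1 U2 x).2.2.2 a
      = lam * ∑ a, x.2.2.2 a * x.1 (Fin.last (n+1)) a := by
    rw [Finset.mul_sum]; refine Finset.sum_congr rfl fun a _ => ?_
    simp only [vB]; ring
  rw [t1, t2, e1, e2, h0, hn, sigmaEP]
  ring

lemma dH_zero (U1 U2 : Vc d → ℝ) (x v : Phs (n+2) d) (k : ℕ) (h1 : v.1 = 0) (h2 : v.2.1 = 0) :
    dH U1 U2 k x v = 0 := by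
  have : ∀ k, cfgNat (0 : Cfg (n+2) d) k = 0 := by intro k; simp [cfgNat]
  simp [dH, h1, h2, this]

lemma rj_r1 {U1 U2 : Vc d → ℝ} (hU1 : ContDiff ℝ (⊤ : ℕ∞) U1)
    (hU2 : ContDiff ℝ (⊤ : ℕ∞) U2) (T1 Tn : ℝ) (j : ℕ) (x : Phs (n+2) d) (a : Fin d) :
    PD (Rj T1 Tn U1 U2 j) x (eR1 a) = x.2.2.1 a / T1 := by
  rw [rj_fderiv hU1 hU2]
  have : ∀ k, dH U1 U2 k x (eR1 a) = 0 := fun k => dH_zero _ _ _ _ _ rfl rfl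
  simp only [this]; simp [eR1, Pi.single_apply]; ring

lemma rj_rn {U1 U2 : Vc d → ℝ} (hU1 : ContDiff ℝ (⊤ : ℕ∞) U1)
    (hU2 : ContDiff ℝ (⊤ : ℕ∞) U2) (T1 Tn : ℝ) (j : ℕ) (x : Phs (n+2) d) (a : Fin d) :
    PD (Rj T1 Tn U1 U2 j) x (eRn a) = x.2.2.2 a / Tn := by
  rw [rj_fderiv hU1 hU2]
  have : ∀ k, dH U1 U2 k x (eRn a) = 0 := fun k => dH_zero _ _ _ _ _ rfl rfl
  simp only [this]; simp [eRn, Pi.single_apply]; ring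

lemma Jl_apply (x : Phs m d) : Jl x = (-x.1, x.2.1, x.2.2.1, x.2.2.2) := rfl

lemma PD_exp {ρ G : Phs m d → ℝ} (hG : ContDiff ℝ (⊤ : ℕ∞) G)
    (h : ∀ y, ρ y = Real.exp (G (Jl y))) (y v : Phs m d) :
    PD ρ y v = ρ y * PD G (Jl y) (Jl v) := by
  have e : ρ = fun y => Real.exp (G (Jl y)) := funext h
  have h1 : HasFDerivAt (fun y => G (Jl y)) ((fderiv ℝ G (Jl y)).comp Jl) y :=
    ((hG.differentiable (by simp) (Jl y)).hasFDerivAt).comp y Jl.hasFDerivAt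
  have h2 := h1.exp
  rw [← e] at h2
  unfold PD
  rw [h2.fderiv, h y]
  simp

lemma PD_contDiff {G : Phs m d → ℝ} (hG : ContDiff ℝ (⊤ : ℕ∞) G) (v : Phs m d) :
    ContDiff ℝ (⊤ : ℕ∞) (fun y => PD G y v) := by
  unfold PD
  exact (hG.fderiv_right (m := (⊤ : ℕ∞)) (by simp)).clm_apply contDiff_const

lemma PD_mul {f g : Phs m d → ℝ} (hf : ContDiff ℝ (⊤ : ℕ∞) f) (hg : ContDiff ℝ (⊤ : ℕ∞) g)
    (y v : Phs m d) : PD (fun z => f z * g z) y v = f y * PD g y v + g y * PD f y v := by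
  unfold PD
  rw [fderiv_fun_mul (hf.differentiable (by simp) y) (hg.differentiable (by simp) y)]
  simp

lemma PD_exp2 {ρ G : Phs m d → ℝ} (hρ : ContDiff ℝ (⊤ : ℕ∞) ρ) (hG : ContDiff ℝ (⊤ : ℕ∞) G)
    (h : ∀ y, ρ y = Real.exp (G (Jl y))) (y v : Phs m d) (hv : Jl v = v) :
    PD (fun z => PD ρ z v) y v
      = ρ y * ((PD G (Jl y) v) ^ 2 + PD (fun z => PD G z v) (Jl y) v) := by
  have e : (fun z => PD ρ z v) = fun z => ρ z * PD G (Jl z) v := by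
    funext z; rw [PD_exp hG h, hv]
  have hc := PD_contDiff hG v
  rw [e, PD_mul hρ (g := fun z => PD G (Jl z) v) (hc.comp Jl.contDiff), PD_exp hG h, hv]
  have : PD (fun z => PD G (Jl z) v) y v = PD (fun z => PD G z v) (Jl y) v := by
    have h1 : HasFDerivAt (fun y => PD G (Jl y) v)
        ((fderiv ℝ (fun z => PD G z v) (Jl y)).comp Jl) y :=
      ((hc.differentiable (by simp) (Jl y)).hasFDerivAt).comp y Jl.hasFDerivAt
    conv_lhs => unfold PD
    rw [show fderiv ℝ (fun y => (fderiv ℝ G (Jl y)) v) y = _ from h1.fderiv]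
    simp [hv, PD]
  rw [this]; ring

lemma PD_comb {F R G : Phs m d → ℝ} (hR : ContDiff ℝ (⊤ : ℕ∞) R) (hG : ContDiff ℝ (⊤ : ℕ∞) G)
    (h : ∀ y, F y = - R y - G y) (y v : Phs m d) : PD F y v = - PD R y v - PD G y v := by
  have e : F = fun y => - R y - G y := funext h
  unfold PD
  rw [e, fderiv_fun_sub (hR.differentiable (by simp) y).fun_neg (hG.differentiable (by simp) y),
    fderiv_fun_neg]
  simp

lemma PD_vB (lam : ℝ) (U1 U2 : Vc d → ℝ) (x : Phs (n+2) d) (f : Phs (n+2) d → ℝ) :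
    PD f x (vB lam U1 U2 x) =
      lam * ((∑ a, x.1 0 a * PD f x (eR1 a)) - ∑ a, x.2.2.1 a * PD f x (eP 0 a))
      + lam * ((∑ a, x.1 (Fin.last (n+1)) a * PD f x (eRn a))
        - ∑ a, x.2.2.2 a * PD f x (eP (Fin.last (n+1)) a))
      + ∑ i, ((∑ a, x.1 i a * PD f x (eQ i a))
        - ∑ a, fderiv ℝ (Vtot U1 U2) x.2.1 (Pi.single i (Pi.single a 1)) * PD f x (eP i a)) :=
  vB_apply lam U1 U2 x (fderiv ℝ f x)

lemma genT_exp (γ lam T1 Tn : ℝ) (U1 U2 : Vc d → ℝ) {ρ G : Phs (n+2) d → ℝ}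
    (hρ : ContDiff ℝ (⊤ : ℕ∞) ρ) (hG : ContDiff ℝ (⊤ : ℕ∞) G)
    (h : ∀ y, ρ y = Real.exp (G (Jl y))) (x : Phs (n+2) d) :
    genT γ lam T1 Tn U1 U2 ρ (Jl x) = ρ (Jl x) *
      (γ * (T1 * ((∑ a, (PD G x (eR1 a)) ^ 2) + ∑ a, PD (fun y => PD G y (eR1 a)) x (eR1 a))
          + (d + ∑ a, x.2.2.1 a * PD G x (eR1 a)))
      + γ * (Tn * ((∑ a, (PD G x (eRn a)) ^ 2) + ∑ a, PD (fun y => PD G y (eRn a)) x (eRn a))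
          + (d + ∑ a, x.2.2.2 a * PD G x (eRn a)))
      + PD G x (vB lam U1 U2 x)) := by
  have hJJ : Jl (Jl x) = x := by simp [Jl_apply]
  have jP : ∀ i a, Jl (eP i a : Phs (n+2) d) = - eP i a := by intro i a; simp [Jl_apply, eP]
  have jQ : ∀ i a, Jl (eQ i a : Phs (n+2) d) = eQ i a := by intro i a; simp [Jl_apply, eQ]
  have j1 : ∀ a, Jl (eR1 a : Phs (n+2) d) = eR1 a := by intro a; simp [Jl_apply, eR1]
  have jn : ∀ a, Jl (eRn a : Phs (n+2) d) = eRn a := by intro a; simp [Jl_apply, eRn]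
  have pneg : ∀ v, PD G x (-v) = - PD G x v := by intro v; simp [PD]
  have dP : ∀ i a, PD ρ (Jl x) (eP i a) = - (ρ (Jl x) * PD G x (eP i a)) := by
    intro i a; rw [PD_exp hG h, hJJ, jP, pneg]; ring
  have dQ : ∀ i a, PD ρ (Jl x) (eQ i a) = ρ (Jl x) * PD G x (eQ i a) := by
    intro i a; rw [PD_exp hG h, hJJ, jQ]
  have d1 : ∀ a, PD ρ (Jl x) (eR1 a) = ρ (Jl x) * PD G x (eR1 a) := by
    intro a; rw [PD_exp hG h, hJJ, j1]
  have dn : ∀ a, PD ρ (Jl x) (eRn a) = ρ (Jl x) * PD G x (eRn a) := by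
    intro a; rw [PD_exp hG h, hJJ, jn]
  have dd1 : ∀ a, PD (fun y => PD ρ y (eR1 a)) (Jl x) (eR1 a)
      = ρ (Jl x) * ((PD G x (eR1 a)) ^ 2 + PD (fun y => PD G y (eR1 a)) x (eR1 a)) := by
    intro a; rw [PD_exp2 hρ hG h _ _ (j1 a), hJJ]
  have ddn : ∀ a, PD (fun y => PD ρ y (eRn a)) (Jl x) (eRn a)
      = ρ (Jl x) * ((PD G x (eRn a)) ^ 2 + PD (fun y => PD G y (eRn a)) x (eRn a)) := by
    intro a; rw [PD_exp2 hρ hG h _ _ (jn a), hJJ]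
  have v1 : ∀ a, PD (fun y : Phs (n+2) d => y.2.2.1 a * ρ y) (Jl x) (eR1 a)
      = ρ (Jl x) * (1 + x.2.2.1 a * PD G x (eR1 a)) := by
    intro a
    have hl := line_comp (U := fun y : Phs (n+2) d => y.2.2.1 a) (by fun_prop) (Jl x) (eR1 a)
    have hl2 : HasDerivAt (fun t : ℝ => (Jl x + t • (eR1 a : Phs (n+2) d)).2.2.1 a) 1 0 := by
      simpa [eR1, Jl_apply] using (hasDerivAt_id (0:ℝ)).const_add (x.2.2.1 a)
    have : PD (fun y : Phs (n+2) d => y.2.2.1 a) (Jl x) (eR1 a) = 1 := hl.unique hl2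
    rw [PD_mul (by fun_prop) hρ, this, d1, Jl_apply]; ring
  have vn : ∀ a, PD (fun y : Phs (n+2) d => y.2.2.2 a * ρ y) (Jl x) (eRn a)
      = ρ (Jl x) * (1 + x.2.2.2 a * PD G x (eRn a)) := by
    intro a
    have hl := line_comp (U := fun y : Phs (n+2) d => y.2.2.2 a) (by fun_prop) (Jl x) (eRn a)
    have hl2 : HasDerivAt (fun t : ℝ => (Jl x + t • (eRn a : Phs (n+2) d)).2.2.2 a) 1 0 := by
      simpa [eRn, Jl_apply] using (hasDerivAt_id (0:ℝ)).const_add (x.2.2.2 a)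
    have : PD (fun y : Phs (n+2) d => y.2.2.2 a) (Jl x) (eRn a) = 1 := hl.unique hl2
    rw [PD_mul (by fun_prop) hρ, this, dn, Jl_apply]; ring
  unfold genT
  rw [PD_vB]
  simp only [dP, dQ, d1, dn, dd1, ddn, v1, vn]
  have x1 : (Jl x).1 = - x.1 := rfl
  have x2 : (Jl x).2 = x.2 := rfl
  simp only [x1, x2]
  generalize ρ (Jl x) = c
  have m1 : ∀ (f g : Fin d → ℝ), ∑ a, f a * (c * g a) = c * ∑ a, f a * g a := by
    intro f g; rw [Finset.mul_sum]; exact Finset.sum_congr rfl fun a _ => by ring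
  have m2 : ∀ (f g : Fin d → ℝ), ∑ a, f a * -(c * g a) = -(c * ∑ a, f a * g a) := by
    intro f g; rw [Finset.mul_sum, ← Finset.sum_neg_distrib]
    exact Finset.sum_congr rfl fun a _ => by ring
  have m4 : ∀ (f g : Fin (n+2) → ℝ), ∑ i, (-(c * f i) - -(c * g i)) = -(c * ∑ i, (f i - g i)) := by
    intro f g; rw [Finset.mul_sum, ← Finset.sum_neg_distrib]
    exact Finset.sum_congr rfl fun a _ => by ring
  simp only [Pi.neg_apply, m1, m2, neg_mul, Finset.sum_neg_distrib, mul_neg]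
  rw [m4]
  simp only [← Finset.mul_sum, Finset.sum_add_distrib, Finset.sum_const, Finset.card_univ,
    Fintype.card_fin, nsmul_eq_mul, mul_one]
  ring

/-- if ρ is a smooth everywhere positive stationary density
(`Lᵀρ = 0`) and `F = −R_j − log(Jρ)` (so that `ρ = J(e^{−R_j}e^{−F})`), then the
entropy production is given pointwise by
`σ_j = γ Σ_{i∈{1,n}} Tᵢ |∇_{rᵢ}F|² − L F`. -/
theorem stmt6 (n d : ℕ) (hd : 1 ≤ d) (γ lam T1 Tn : ℝ)
    (hγ : 0 < γ) (hlam : 0 < lam) (hT1 : 0 < T1) (hTn : 0 < Tn)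
    (U1 U2 : Vc d → ℝ) (hU1 : ContDiff ℝ (⊤ : ℕ∞) U1) (hU2 : ContDiff ℝ (⊤ : ℕ∞) U2)
    (j : ℕ) (hj : j ≤ n + 2)
    (ρ : Phs (n+2) d → ℝ) (hρ : ContDiff ℝ (⊤ : ℕ∞) ρ) (hρpos : ∀ x, 0 < ρ x)
    (hstat : ∀ x, genT γ lam T1 Tn U1 U2 ρ x = 0)
    (F : Phs (n+2) d → ℝ)
    (hF : ∀ x : Phs (n+2) d,
      F x = - Rj T1 Tn U1 U2 j x - Real.log (ρ (-x.1, x.2.1, x.2.2.1, x.2.2.2))) :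
    ∀ x : Phs (n+2) d,
      sigmaEP lam T1 Tn U2 j x
        = γ * (T1 * (∑ a, (PD F x (eR1 a)) ^ 2)
               + Tn * (∑ a, (PD F x (eRn a)) ^ 2))
          - gen γ lam T1 Tn U1 U2 F x := by
  intro x
  have hR := rj_contDiff (n := n) hU1 hU2 T1 Tn j
  obtain ⟨G, hGdef⟩ : ∃ G : Phs (n+2) d → ℝ, G = fun x => Real.log (ρ (Jl x)) := ⟨_, rfl⟩
  have hG : ContDiff ℝ (⊤ : ℕ∞) G := by
    rw [hGdef]; exact (hρ.comp Jl.contDiff).log fun x => (hρpos _).ne'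
  have hexp : ∀ y, ρ y = Real.exp (G (Jl y)) := by
    intro y
    have hJJ : Jl (Jl y) = y := by simp [Jl_apply]
    rw [hGdef]; simp only [hJJ]; rw [Real.exp_log (hρpos y)]
  have hFG : ∀ y, F y = - Rj T1 Tn U1 U2 j y - G y := by
    intro y; rw [hF, hGdef]; rfl
  have hst := hstat (Jl x)
  rw [genT_exp γ lam T1 Tn U1 U2 hρ hG hexp x] at hst
  have hst := (mul_eq_zero.1 hst).resolve_left (hρpos _).ne'
  have hPD := PD_comb hR hG hFG
  have f1 : ∀ y a, PD F y (eR1 a) = - (y.2.2.1 a / T1) - PD G y (eR1 a) := by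
    intro y a; rw [hPD, rj_r1 hU1 hU2]
  have fn : ∀ y a, PD F y (eRn a) = - (y.2.2.2 a / Tn) - PD G y (eRn a) := by
    intro y a; rw [hPD, rj_rn hU1 hU2]
  have ff1 : ∀ a, PD (fun y => PD F y (eR1 a)) x (eR1 a)
      = - (1 / T1) - PD (fun y => PD G y (eR1 a)) x (eR1 a) := by
    intro a
    have hc : ContDiff ℝ (⊤ : ℕ∞) (fun y : Phs (n+2) d => y.2.2.1 a / T1) := by fun_prop
    rw [PD_comb hc (PD_contDiff hG (eR1 a)) (fun y => f1 y a)]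
    have hl := line_comp hc x (eR1 a)
    have hl2 : HasDerivAt (fun t : ℝ => (x + t • (eR1 a : Phs (n+2) d)).2.2.1 a / T1) (1 / T1) 0 := by
      simpa [eR1] using ((hasDerivAt_id (0:ℝ)).const_add (x.2.2.1 a)).div_const T1
    have : PD (fun y : Phs (n+2) d => y.2.2.1 a / T1) x (eR1 a) = 1 / T1 := hl.unique hl2
    rw [this]
  have ffn : ∀ a, PD (fun y => PD F y (eRn a)) x (eRn a)
      = - (1 / Tn) - PD (fun y => PD G y (eRn a)) x (eRn a) := by
    intro a
    have hc : ContDiff ℝ (⊤ : ℕ∞) (fun y : Phs (n+2) d => y.2.2.2 a / Tn) := by fun_prop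
    rw [PD_comb hc (PD_contDiff hG (eRn a)) (fun y => fn y a)]
    have hl := line_comp hc x (eRn a)
    have hl2 : HasDerivAt (fun t : ℝ => (x + t • (eRn a : Phs (n+2) d)).2.2.2 a / Tn) (1 / Tn) 0 := by
      simpa [eRn] using ((hasDerivAt_id (0:ℝ)).const_add (x.2.2.2 a)).div_const Tn
    have : PD (fun y : Phs (n+2) d => y.2.2.2 a / Tn) x (eRn a) = 1 / Tn := hl.unique hl2
    rw [this]
  have hB := hPD x (vB lam U1 U2 x)
  rw [rj_vB lam hU1 hU2 T1 Tn j hj x] at hB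
  have hgen : gen γ lam T1 Tn U1 U2 F x =
      γ * (T1 * ∑ a, PD (fun y => PD F y (eR1 a)) x (eR1 a) - ∑ a, x.2.2.1 a * PD F x (eR1 a))
      + γ * (Tn * ∑ a, PD (fun y => PD F y (eRn a)) x (eRn a) - ∑ a, x.2.2.2 a * PD F x (eRn a))
      + PD F x (vB lam U1 U2 x) := by
    rw [PD_vB]; unfold gen; ring
  have alg : ∀ (T : ℝ), 0 < T → ∀ (r g h : Fin d → ℝ),
      T * ∑ a, (-(r a / T) - g a) ^ 2 - (T * ∑ a, (-(1 / T) - h a) - ∑ a, r a * (-(r a / T) - g a))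
      = T * ((∑ a, g a ^ 2) + ∑ a, h a) + (d + ∑ a, r a * g a) := by
    intro T hT r g h
    have hd' : (d : ℝ) = ∑ a : Fin d, (1 : ℝ) := by simp
    rw [hd']
    simp only [Finset.mul_sum, ← Finset.sum_add_distrib, ← Finset.sum_sub_distrib]
    refine Finset.sum_congr rfl fun a _ => ?_
    field_simp
    ring
  have A1 := alg T1 hT1 (fun a => x.2.2.1 a) (fun a => PD G x (eR1 a))
    (fun a => PD (fun y => PD G y (eR1 a)) x (eR1 a))
  have An := alg Tn hTn (fun a => x.2.2.2 a) (fun a => PD G x (eRn a))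
    (fun a => PD (fun y => PD G y (eRn a)) x (eRn a))
  rw [hgen, hB]
  simp only [ff1, ffn]
  simp only [f1, fn]
  linear_combination (-1 : ℝ) * hst - γ * A1 - γ * An

end
end
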